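/- arXiv:math/0406242 — 3 statements merged into one kernel-verified Lean document; each statement's English description precedes it below -/
import Mathlib

section
/- Fix m ≥ 1, a nonconstant cyclic word Ω : ℤ/mℤ → Bool, and the associated angles x_i, y_i, z_i and closed polytope P̄. Suppose w ∈ P̄ maximizes the total volume V over P̄ (i.e., V(w') ≤ V(w) for all w' ∈ P̄). Then for every i ∈ ℤ/mℤ, if at least one of x_i, y_i, z_i equals 0, then at least two of x_i, y_i, z_i equal 0 and the remaining one equals π. (There are no simple degeneracies at a volume maximizer, only double degeneracies.) -/
open Real

/-- `i` is a hinge index iff the letters (`false` = `L`, `true` = `R`) just before and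
just after layer `i` differ. -/
def IsHinge {m : ℕ} (Ω : ZMod m → Bool) (i : ZMod m) : Prop := Ω (i - 1) ≠ Ω i

/-- The dihedral angle `x_i` of layer `i`, determined by the parameters `w` and the
letters of the cyclic word `Ω` (`false` = `L`, `true` = `R`). -/
noncomputable def xAng {m : ℕ} (Ω : ZMod m → Bool) (w : ZMod m → ℝ) (i : ZMod m) : ℝ :=
  if Ω (i - 1) = Ω i then
    if Ω i = false then w (i - 1) + w (i + 1) else -w (i - 1) + 2 * w i - w (i + 1)
  else
    if Ω (i - 1) = false then w (i - 1) + w i - w (i + 1)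
    else -w (i - 1) + w i + w (i + 1)

/-- The dihedral angle `y_i` of layer `i`. -/
noncomputable def yAng {m : ℕ} (Ω : ZMod m → Bool) (w : ZMod m → ℝ) (i : ZMod m) : ℝ :=
  if Ω (i - 1) = Ω i then
    if Ω i = false then -w (i - 1) + 2 * w i - w (i + 1) else w (i - 1) + w (i + 1)
  else
    if Ω (i - 1) = false then -w (i - 1) + w i + w (i + 1)
    else w (i - 1) + w i - w (i + 1)

/-- The dihedral angle `z_i := π − 2 w i` of layer `i`. -/
noncomputable def zAng {m : ℕ} (w : ZMod m → ℝ) (i : ZMod m) : ℝ := π - 2 * w i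

/-- The closed polytope `P̄` of weak angle structures: range, concavity and hinge
conditions with weak inequalities. -/
def Pbar (m : ℕ) (Ω : ZMod m → Bool) : Set (ZMod m → ℝ) :=
  {w | (∀ i, 0 ≤ w i ∧ w i ≤ π / 2) ∧
       (∀ i, ¬IsHinge Ω i → w (i - 1) + w (i + 1) ≤ 2 * w i) ∧
       (∀ i, IsHinge Ω i → |w (i + 1) - w (i - 1)| ≤ w i)}

/-- The Lobachevsky-type integral `∫₀ˣ log(2 sin u) du`. -/
noncomputable def lob (x : ℝ) : ℝ := ∫ u in (0:ℝ)..x, Real.log (2 * Real.sin u)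

/-- The volume `𝒱(x,y,z)` of the ideal tetrahedron with dihedral angles `x, y, z`. -/
noncomputable def idealVol (x y z : ℝ) : ℝ := -lob x - lob y - lob z

/-- The total volume functional `V(w) = Σᵢ 𝒱(xᵢ, yᵢ, zᵢ)`. -/
noncomputable def totalVol (m : ℕ) [NeZero m] (Ω : ZMod m → Bool) (w : ZMod m → ℝ) : ℝ :=
  ∑ i : ZMod m, idealVol (xAng Ω w i) (yAng Ω w i) (zAng w i)

theorem lob_ii (a b : ℝ) : IntervalIntegrable (fun u => Real.log (2 * Real.sin u)) MeasureTheory.volume a b := by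
  have h : AnalyticOnNhd ℝ (fun u : ℝ => 2 * Real.sin u) Set.univ := by
    intro x _
    exact analyticAt_const.mul Real.analyticAt_sin
  have := (h.mono (Set.subset_univ (Set.uIcc a b))).meromorphicOn
  exact MeromorphicOn.intervalIntegrable_log this

theorem lob_near_zero (s : ℝ) (h0 : 0 ≤ s) (h1 : s ≤ π / 2) :
    |lob s - s * Real.log s| ≤ 2 * s := by
  have hl : IntervalIntegrable Real.log MeasureTheory.volume 0 s := intervalIntegral.intervalIntegrable_log'
  have h2 : lob s - ∫ u in (0:ℝ)..s, Real.log u = ∫ u in (0:ℝ)..s, (Real.log (2 * Real.sin u) - Real.log u) := by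
    rw [intervalIntegral.integral_sub (lob_ii 0 s) hl]; rfl
  have h3 : ‖∫ u in (0:ℝ)..s, (Real.log (2 * Real.sin u) - Real.log u)‖ ≤ 1 * |s - 0| := by
    apply intervalIntegral.norm_integral_le_of_norm_le_const
    intro u hu
    rw [Set.uIoc_of_le h0] at hu
    have hu0 : 0 < u := hu.1
    have hup : u ≤ π / 2 := hu.2.trans h1
    have hs1 : Real.sin u ≤ u := Real.sin_le hu0.le
    have hs2 : 2 / π * u ≤ Real.sin u := Real.mul_le_sin hu0.le hup
    have hs3 : u / 2 ≤ Real.sin u := by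
      have : 1 / 2 ≤ 2 / π := by
        rw [div_le_div_iff₀ (by norm_num) Real.pi_pos]; linarith [Real.pi_le_four]
      nlinarith
    have hl2 : Real.log 2 ≤ 1 := by linarith [Real.log_two_lt_d9]
    have e1 : Real.log u ≤ Real.log (2 * Real.sin u) := Real.log_le_log hu0 (by linarith)
    have e2 : Real.log (2 * Real.sin u) ≤ Real.log (2 * u) := Real.log_le_log (by linarith) (by linarith)
    rw [Real.log_mul (by norm_num) hu0.ne'] at e2
    rw [Real.norm_eq_abs, abs_le]
    constructor <;> linarith
  rw [← h2, Real.norm_eq_abs, integral_log, sub_zero, abs_of_nonneg h0, abs_le] at h3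
  rw [abs_le]
  constructor <;> linarith [h3.1, h3.2]

theorem lob_pi_sub (s : ℝ) : lob (π - s) - lob π = - lob s := by
  have h : lob s = ∫ u in (π - s)..π, Real.log (2 * Real.sin u) := by
    have := intervalIntegral.integral_comp_sub_left (a := 0) (b := s) (fun u => Real.log (2 * Real.sin u)) π
    simp only [Real.sin_pi_sub, sub_zero] at this
    exact this
  have h2 := intervalIntegral.integral_add_adjacent_intervals (lob_ii 0 (π - s)) (lob_ii (π - s) π)
  rw [h]
  unfold lob
  linarith

theorem lob_hasDeriv (x : ℝ) (h0 : 0 < x) (h1 : x < π) :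
    HasDerivAt lob (Real.log (2 * Real.sin x)) x := by
  have hs := Real.sin_pos_of_pos_of_lt_pi h0 h1
  apply intervalIntegral.integral_hasDerivAt_right (lob_ii 0 x)
  · apply Measurable.stronglyMeasurable _ |>.stronglyMeasurableAtFilter
    fun_prop
  · apply ContinuousAt.log
    · fun_prop
    · positivity

open Filter Topology Asymptotics in
theorem lob_zero_bigO (b : ℝ) (hb : 0 ≤ b) :
    (fun t : ℝ => lob (t * b) - b * (t * Real.log t)) =O[𝓝[>] 0] (fun t => t) := by
  rcases hb.eq_or_lt with rfl | hb
  · simp only [mul_zero, zero_mul, sub_zero]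
    simp only [lob, intervalIntegral.integral_same]
    exact isBigO_zero _ _
  apply IsBigO.of_bound (2 * b + b * |Real.log b|)
  have hev : ∀ᶠ t : ℝ in 𝓝[>] 0, t ∈ Set.Ioo (0:ℝ) (π / 2 / b) := 
    Ioo_mem_nhdsGT (by positivity)
  filter_upwards [hev] with t ht
  have h := lob_near_zero (t * b) (mul_nonneg ht.1.le hb.le) ((lt_div_iff₀ hb).1 ht.2).le
  rw [Real.log_mul ht.1.ne' hb.ne'] at h
  rw [Real.norm_eq_abs, Real.norm_eq_abs, abs_of_pos ht.1]
  have e : lob (t * b) - b * (t * Real.log t) = 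
    (lob (t * b) - t * b * (Real.log t + Real.log b)) + t * b * Real.log b := by ring
  rw [e]
  refine (abs_add_le _ _).trans ?_
  rw [abs_mul (t * b), abs_of_pos (mul_pos ht.1 hb)]
  nlinarith

open Classical in
noncomputable def dcoef (x a : ℝ) : ℝ := if x = 0 ∨ x = π then a else 0

open Filter Topology Asymptotics in
theorem lob_bigO (x x' : ℝ) (h0 : 0 ≤ x) (h1 : x ≤ π) (h0' : 0 ≤ x') (h1' : x' ≤ π) :
    (fun t : ℝ => lob (x + t * (x' - x)) - lob x - dcoef x (x' - x) * (t * Real.log t)) =O[𝓝[>] 0] (fun t => t) := by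
  by_cases hx : x = 0
  · subst hx
    have := lob_zero_bigO x' h0'
    simpa [dcoef, lob] using this
  by_cases hx' : x = π
  · subst hx'
    have := (lob_zero_bigO (π - x') (by linarith)).neg_left
    refine this.congr_left fun t => ?_
    have e := lob_pi_sub (t * (π - x'))
    have e2 : π + t * (x' - π) = π - t * (π - x') := by ring
    rw [e2, e]
    simp [dcoef]
    ring
  · have hd : dcoef x (x' - x) = 0 := by simp [dcoef, hx, hx']
    have hD := lob_hasDeriv x (lt_of_le_of_ne h0 (Ne.symm hx)) (lt_of_le_of_ne h1 hx')
    have hg : HasDerivAt (fun t : ℝ => x + t * (x' - x)) (1 * (x' - x)) 0 := 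
      ((hasDerivAt_id (0:ℝ)).mul_const _).const_add _
    have hc : HasDerivAt (fun t : ℝ => lob (x + t * (x' - x))) (Real.log (2 * Real.sin x) * (1 * (x' - x))) 0 := by
      refine HasDerivAt.comp (0:ℝ) (h₂ := lob) ?_ hg
      simpa using hD
    have := hc.isBigO_sub.mono (nhdsWithin_le_nhds (s := Set.Ioi 0))
    simpa [hd] using this

theorem ang_sum {m : ℕ} (Ω : ZMod m → Bool) (w : ZMod m → ℝ) (i : ZMod m) :
    xAng Ω w i + yAng Ω w i + zAng w i = π := by
  unfold xAng yAng zAng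
  split_ifs <;> ring

theorem ang_nonneg {m : ℕ} {Ω : ZMod m → Bool} {w : ZMod m → ℝ} (hw : w ∈ Pbar m Ω) (i : ZMod m) :
    0 ≤ xAng Ω w i ∧ 0 ≤ yAng Ω w i ∧ 0 ≤ zAng w i := by
  obtain ⟨h1, h2, h3⟩ := hw
  have a := h1 i
  have b := h1 (i - 1)
  have c := h1 (i + 1)
  have d := h2 i
  have e := h3 i
  unfold IsHinge at d e
  unfold xAng yAng zAng
  split_ifs with p q q
  · have d := d (not_not.2 p)
    refine ⟨?_, ?_, ?_⟩ <;> linarith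
  · have d := d (not_not.2 p)
    refine ⟨?_, ?_, ?_⟩ <;> linarith
  · have e := abs_le.1 (e p)
    refine ⟨?_, ?_, ?_⟩ <;> linarith
  · have e := abs_le.1 (e p)
    refine ⟨?_, ?_, ?_⟩ <;> linarith

theorem exists_hinge {m : ℕ} [NeZero m] (Ω : ZMod m → Bool) (hΩ : ∃ i j, Ω i ≠ Ω j) :
    ∃ j, IsHinge Ω j := by
  by_contra hn
  push Not at hn
  have hn' : ∀ j, Ω (j - 1) = Ω j := fun j => by
    by_contra h; exact hn j h
  have key : ∀ n : ℕ, Ω (n : ZMod m) = Ω 0 := by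
    intro n
    induction n with
    | zero => simp
    | succ k ih =>
      have := hn' ((k + 1 : ℕ) : ZMod m)
      rw [← this, ← ih]
      congr 1
      push_cast; ring
  obtain ⟨i, j, h⟩ := hΩ
  apply h
  rw [← ZMod.natCast_zmod_val i, ← ZMod.natCast_zmod_val j, key, key]

theorem exists_bump {m : ℕ} [NeZero m] (j : ZMod m) :
    ∃ g : ZMod m → ℝ, (∀ i, 0 ≤ g i ∧ g i ≤ (m:ℝ)^2) ∧ ∀ i, i ≠ j → g (i - 1) + g (i + 1) < 2 * g i := by
  let f : ℕ → ℝ := fun k => (k:ℝ) * (m - k)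
  have hf : ∀ k : ℕ, f (k % m) = f k ∨ m < k := by
    intro k
    rcases lt_trichotomy k m with h | h | h
    · left; rw [Nat.mod_eq_of_lt h]
    · left; subst h; simp [f]
    · right; exact h
  refine ⟨fun i => f (i - j).val, fun i => ?_, fun i hi => ?_⟩
  · have h : ((i - j).val : ℝ) ≤ m := by exact_mod_cast (ZMod.val_lt (i - j)).le
    have h0 : (0:ℝ) ≤ ((i - j).val : ℝ) := by positivity
    constructor
    · exact mul_nonneg h0 (by linarith)
    · show ((i - j).val : ℝ) * (m - (i-j).val) ≤ _
      nlinarith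
  · have hne : i - j ≠ 0 := sub_ne_zero.2 hi
    obtain ⟨k, hk⟩ : ∃ k, (i - j).val = k + 1 := 
      Nat.exists_eq_succ_of_ne_zero (by rwa [Ne, ZMod.val_eq_zero])
    have hkm : k + 1 < m := hk ▸ ZMod.val_lt (i - j)
    have e : i - j = ((k + 1 : ℕ) : ZMod m) := by rw [← hk, ZMod.natCast_zmod_val]
    have e1 : i - 1 - j = ((k : ℕ) : ZMod m) := by
      have : i - 1 - j = (i - j) - 1 := by ring
      rw [this, e]; push_cast; ring
    have e2 : i + 1 - j = ((k + 2 : ℕ) : ZMod m) := by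
      have : i + 1 - j = (i - j) + 1 := by ring
      rw [this, e]; push_cast; ring
    show f (i - 1 - j).val + f (i + 1 - j).val < 2 * f (i - j).val
    rw [hk, e1, e2, ZMod.val_natCast, ZMod.val_natCast, (hf k).resolve_right (by omega),
      (hf (k+2)).resolve_right (by omega)]
    simp only [f]; push_cast
    nlinarith

theorem exists_interior {m : ℕ} [NeZero m] (Ω : ZMod m → Bool) (hΩ : ∃ i j, Ω i ≠ Ω j) :
    ∃ w ∈ Pbar m Ω, ∀ i, 0 < xAng Ω w i ∧ 0 < yAng Ω w i ∧ 0 < zAng w i := by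
  obtain ⟨j, hj⟩ := exists_hinge Ω hΩ
  obtain ⟨g, hg, hc⟩ := exists_bump j
  have hm : (0:ℝ) < (m:ℝ)^2 := by
    have : (m:ℝ) ≠ 0 := by exact_mod_cast NeZero.ne m
    positivity
  obtain ⟨ε, hε, hεm⟩ : ∃ ε : ℝ, 0 < ε ∧ ε * (m:ℝ)^2 = π / 8 :=
    ⟨π / 8 / (m:ℝ)^2, by positivity, div_mul_cancel₀ _ hm.ne'⟩
  have hpi := Real.pi_pos
  have hb : ∀ i, 0 ≤ ε * g i ∧ ε * g i ≤ π / 8 := fun i =>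
    ⟨mul_nonneg hε.le (hg i).1, hεm ▸ mul_le_mul_of_nonneg_left (hg i).2 hε.le⟩
  have hcc : ∀ i, ¬ IsHinge Ω i → ε * g (i - 1) + ε * g (i + 1) < 2 * (ε * g i) := by
    intro i hi
    have : i ≠ j := by rintro rfl; exact hi hj
    have := mul_lt_mul_of_pos_left (hc i this) hε
    linarith
  refine ⟨fun i => π / 4 + ε * g i, ⟨fun i => ?_, fun i hi => ?_, fun i hi => ?_⟩, fun i => ?_⟩
  · have := hb i
    constructor <;> linarith
  · have := hcc i hi
    simp only; linarith
  · have a := hb i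
    have b := hb (i - 1)
    have c := hb (i + 1)
    simp only
    rw [abs_le]; constructor <;> linarith
  · have a := hb i
    have b := hb (i - 1)
    have c := hb (i + 1)
    have d := hcc i
    unfold IsHinge at d
    unfold xAng yAng zAng
    split_ifs with p q q
    · have d := d (not_not.2 p)
      refine ⟨?_, ?_, ?_⟩ <;> linarith
    · have d := d (not_not.2 p)
      refine ⟨?_, ?_, ?_⟩ <;> linarith
    · refine ⟨?_, ?_, ?_⟩ <;> linarith
    · refine ⟨?_, ?_, ?_⟩ <;> linarith

theorem dcoef_sum_nonneg (x y z x' y' z' : ℝ) (hx : 0 ≤ x) (hy : 0 ≤ y) (hz : 0 ≤ z) (h : x + y + z = π)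
    (hx' : 0 < x') (hy' : 0 < y') (hz' : 0 < z') (h' : x' + y' + z' = π) :
    0 ≤ dcoef x (x' - x) + dcoef y (y' - y) + dcoef z (z' - z) ∧
    ((x = 0 ∨ y = 0 ∨ z = 0) → ¬ ((x = 0 ∧ y = 0 ∧ z = π) ∨ (x = 0 ∧ z = 0 ∧ y = π) ∨ (y = 0 ∧ z = 0 ∧ x = π)) →
      0 < dcoef x (x' - x) + dcoef y (y' - y) + dcoef z (z' - z)) := by
  have hpi := Real.pi_pos
  unfold dcoef
  constructor
  · split_ifs <;> grind
  · intro h1 h2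
    split_ifs <;> grind

theorem Pbar_seg {m : ℕ} {Ω : ZMod m → Bool} {w w' : ZMod m → ℝ} (hw : w ∈ Pbar m Ω) (hw' : w' ∈ Pbar m Ω)
    (t : ℝ) (h0 : 0 ≤ t) (h1 : t ≤ 1) : (fun i => w i + t * (w' i - w i)) ∈ Pbar m Ω := by
  obtain ⟨a1, a2, a3⟩ := hw
  obtain ⟨b1, b2, b3⟩ := hw'
  have h1' : 0 ≤ 1 - t := by linarith
  refine ⟨fun i => ?_, fun i hi => ?_, fun i hi => ?_⟩
  · have := a1 i; have := b1 i
    constructor <;> nlinarith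
  · have := a2 i hi; have := b2 i hi
    simp only; nlinarith
  · have p := abs_le.1 (a3 i hi); have q := abs_le.1 (b3 i hi)
    simp only
    rw [abs_le]
    have := mul_le_mul_of_nonneg_left p.1 h1'
    have := mul_le_mul_of_nonneg_left p.2 h1'
    have := mul_le_mul_of_nonneg_left q.1 h0
    have := mul_le_mul_of_nonneg_left q.2 h0
    constructor <;> linarith

theorem ang_seg {m : ℕ} (Ω : ZMod m → Bool) (w w' : ZMod m → ℝ) (t : ℝ) (i : ZMod m) :
    xAng Ω (fun i => w i + t * (w' i - w i)) i = xAng Ω w i + t * (xAng Ω w' i - xAng Ω w i) ∧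
    yAng Ω (fun i => w i + t * (w' i - w i)) i = yAng Ω w i + t * (yAng Ω w' i - yAng Ω w i) ∧
    zAng (fun i => w i + t * (w' i - w i)) i = zAng w i + t * (zAng w' i - zAng w i) := by
  unfold xAng yAng zAng
  refine ⟨?_, ?_, ?_⟩
  · split_ifs <;> ring
  · split_ifs <;> ring
  · ring

/-- At a maximizer of the total volume over `P̄`, there are no simple degeneracies:
if one of the angles of a layer vanishes, then two of them vanish and the third is `π`. -/
theorem no_simple_degeneracy_at_maximizer (m : ℕ) [NeZero m] (Ω : ZMod m → Bool)
    (hΩ : ∃ i j, Ω i ≠ Ω j)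
    (w : ZMod m → ℝ) (hw : w ∈ Pbar m Ω)
    (hmax : ∀ w' ∈ Pbar m Ω, totalVol m Ω w' ≤ totalVol m Ω w) :
    ∀ i, (xAng Ω w i = 0 ∨ yAng Ω w i = 0 ∨ zAng w i = 0) →
      (xAng Ω w i = 0 ∧ yAng Ω w i = 0 ∧ zAng w i = π) ∨
      (xAng Ω w i = 0 ∧ zAng w i = 0 ∧ yAng Ω w i = π) ∨
      (yAng Ω w i = 0 ∧ zAng w i = 0 ∧ xAng Ω w i = π) := by
  intro i hi
  by_contra hcon
  obtain ⟨w', hw', hpos⟩ := exists_interior Ω hΩ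
  let D : ZMod m → ℝ := fun k => dcoef (xAng Ω w k) (xAng Ω w' k - xAng Ω w k) +
    dcoef (yAng Ω w k) (yAng Ω w' k - yAng Ω w k) + dcoef (zAng w k) (zAng w' k - zAng w k)
  have hD := fun k => dcoef_sum_nonneg _ _ _ _ _ _ (ang_nonneg hw k).1 (ang_nonneg hw k).2.1
    (ang_nonneg hw k).2.2 (ang_sum Ω w k) (hpos k).1 (hpos k).2.1 (hpos k).2.2 (ang_sum Ω w' k)
  have hA : 0 < ∑ k, D k :=
    Finset.sum_pos' (fun k _ => (hD k).1) ⟨i, Finset.mem_univ _, (hD i).2 hi hcon⟩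
  have hO : (fun t : ℝ => ∑ k, ((lob (xAng Ω w k + t * (xAng Ω w' k - xAng Ω w k)) - lob (xAng Ω w k)
        - dcoef (xAng Ω w k) (xAng Ω w' k - xAng Ω w k) * (t * Real.log t)) +
      (lob (yAng Ω w k + t * (yAng Ω w' k - yAng Ω w k)) - lob (yAng Ω w k)
        - dcoef (yAng Ω w k) (yAng Ω w' k - yAng Ω w k) * (t * Real.log t)) +
      (lob (zAng w k + t * (zAng w' k - zAng w k)) - lob (zAng w k)
        - dcoef (zAng w k) (zAng w' k - zAng w k) * (t * Real.log t))))
      =O[nhdsWithin 0 (Set.Ioi 0)] (fun t : ℝ => t) := by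
    apply Asymptotics.IsBigO.fun_sum
    intro k _
    obtain ⟨a, b, c⟩ := ang_nonneg hw k
    obtain ⟨a', b', c'⟩ := ang_nonneg hw' k
    have s := ang_sum Ω w k
    have s' := ang_sum Ω w' k
    refine ((lob_bigO _ _ ?_ ?_ ?_ ?_).add (lob_bigO _ _ ?_ ?_ ?_ ?_)).add (lob_bigO _ _ ?_ ?_ ?_ ?_) <;>
      linarith
  have hO2 : (fun t : ℝ => totalVol m Ω w - totalVol m Ω (fun i => w i + t * (w' i - w i))
      - (∑ k, D k) * (t * Real.log t)) =O[nhdsWithin 0 (Set.Ioi 0)] (fun t : ℝ => t) := by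
    refine hO.congr_left fun t => ?_
    unfold totalVol
    rw [Finset.sum_mul, ← Finset.sum_sub_distrib, ← Finset.sum_sub_distrib]
    refine Finset.sum_congr rfl fun k _ => ?_
    obtain ⟨e1, e2, e3⟩ := ang_seg Ω w w' t k
    rw [e1, e2, e3]
    simp only [idealVol, D]
    ring
  obtain ⟨C, hC⟩ := hO2.bound
  have hlog := Real.tendsto_log_nhdsGT_zero.eventually (Filter.eventually_lt_atBot (-(C / ∑ k, D k)))
  have hev : ∀ᶠ t : ℝ in nhdsWithin 0 (Set.Ioi 0), t ∈ Set.Ioo (0:ℝ) 1 := Ioo_mem_nhdsGT one_pos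
  obtain ⟨t, h1, h2, h3⟩ := (hC.and (hlog.and hev)).exists
  have h4 := hmax _ (Pbar_seg hw hw' t h3.1.le h3.2.le)
  rw [Real.norm_eq_abs, Real.norm_eq_abs, abs_of_pos h3.1] at h1
  have h5 := (abs_le.1 h1).2
  have h6 : (∑ k, D k) * Real.log t < -C := by
    have := mul_lt_mul_of_pos_left h2 hA
    rwa [mul_neg, mul_div_cancel₀ _ hA.ne'] at this
  have h7 := mul_lt_mul_of_pos_right h6 h3.1
  linarith
end

section
/- Fix m ≥ 1, a nonconstant cyclic word Ω : ℤ/mℤ → Bool, and the associated angles x_i, y_i, z_i and closed polytope P̄. Let w ∈ P̄ be such that for every index j, if one of x_j, y_j, z_j equals 0 then at least two of them equal 0 (no simple degeneracies). Call layer j flat if w(j) ∈ {0, π/2}. Then for every i ∈ ℤ/mℤ, if layers i−1 and i are both flat, layer i+1 is flat as well: w(i+1) ∈ {0, π/2}. (Domino effect.) -/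
open Real

/-- Domino effect: for `w ∈ P̄` with no simple degeneracies (whenever an angle of a layer
vanishes, at least two of its angles vanish), if layers `i−1` and `i` are both flat
(`w ∈ {0, π/2}`), then layer `i+1` is flat as well. -/
theorem domino_effect (m : ℕ) [NeZero m] (Ω : ZMod m → Bool)
    (hΩ : ∃ i j, Ω i ≠ Ω j)
    (w : ZMod m → ℝ) (hw : w ∈ Pbar m Ω)
    (hnosimple : ∀ j, (xAng Ω w j = 0 ∨ yAng Ω w j = 0 ∨ zAng w j = 0) →
      (xAng Ω w j = 0 ∧ yAng Ω w j = 0) ∨ (xAng Ω w j = 0 ∧ zAng w j = 0) ∨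
      (yAng Ω w j = 0 ∧ zAng w j = 0)) :
    ∀ i, (w (i - 1) = 0 ∨ w (i - 1) = π / 2) → (w i = 0 ∨ w i = π / 2) →
      (w (i + 1) = 0 ∨ w (i + 1) = π / 2) := by
  obtain ⟨h1, h2, h3⟩ := hw
  intro i hp hi
  have hpi := Real.pi_pos
  have b1 := h1 (i - 1)
  have b2 := h1 (i + 1)
  rcases hi with hi | hi
  · by_cases hh : IsHinge Ω i
    · have h := abs_le.mp (h3 i hh)
      have e : w (i + 1) = w (i - 1) := by linarith [h.1, h.2]
      rw [e]; exact hp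
    · have h := h2 i hh
      left; linarith [b1.1, b2.1]
  · have hz : zAng w i = 0 := by unfold zAng; linarith
    have hxy : xAng Ω w i = 0 ∨ yAng Ω w i = 0 := by
      rcases hnosimple i (Or.inr (Or.inr hz)) with h | h | h
      · exact Or.inl h.1
      · exact Or.inl h.1
      · exact Or.inr h.1
    unfold xAng yAng at hxy
    rw [hi] at hxy
    obtain ⟨c1, c2⟩ := b1
    obtain ⟨d1, d2⟩ := b2
    split_ifs at hxy <;> rcases hxy with h | h <;> rcases hp with hp | hp <;>
      first
      | (left; linarith)
      | (right; linarith)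
end

section
/- Fix m ≥ 1, a nonconstant cyclic word Ω : ℤ/mℤ → Bool, and w : ℤ/mℤ → ℝ, with the associated angles x_i, y_i, z_i of each layer. Then all angles are positive — i.e., x_i > 0, y_i > 0 and z_i > 0 for every i ∈ ℤ/mℤ — if and only if w satisfies all three families of conditions: (range) 0 < w(i) < π/2 for all i; (concavity) w(i−1) + w(i+1) < 2·w(i) at every nonhinge index i; (hinge) |w(i+1) − w(i−1)| < w(i) at every hinge index i. -/
open Real

/-- All angles of all layers are positive if and only if the parameters `w` satisfy the
range, concavity and hinge conditions (with strict inequalities). -/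
theorem angles_positive_iff (m : ℕ) [NeZero m] (Ω : ZMod m → Bool)
    (hΩ : ∃ i j, Ω i ≠ Ω j) (w : ZMod m → ℝ) :
    (∀ i, 0 < xAng Ω w i ∧ 0 < yAng Ω w i ∧ 0 < zAng w i) ↔
      ((∀ i, 0 < w i ∧ w i < π / 2) ∧
       (∀ i, ¬IsHinge Ω i → w (i - 1) + w (i + 1) < 2 * w i) ∧
       (∀ i, IsHinge Ω i → |w (i + 1) - w (i - 1)| < w i)) := by
  constructor
  · intro h
    refine ⟨fun i => ?_, fun i hi => ?_, fun i hi => ?_⟩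
    · obtain ⟨hx, hy, hz⟩ := h i
      unfold xAng at hx
      unfold yAng at hy
      unfold zAng at hz
      split_ifs at hx hy <;> constructor <;> linarith
    · obtain ⟨hx, hy, -⟩ := h i
      unfold IsHinge at hi
      push Not at hi
      unfold xAng at hx
      unfold yAng at hy
      rw [if_pos hi] at hx hy
      split_ifs at hx hy <;> linarith
    · obtain ⟨hx, hy, -⟩ := h i
      unfold IsHinge at hi
      unfold xAng at hx
      unfold yAng at hy
      rw [if_neg hi] at hx hy
      rw [abs_lt]
      split_ifs at hx hy <;> constructor <;> linarith
  · rintro ⟨hr, hc, hh⟩ i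
    have h0 := hr i
    have h1 := (hr (i - 1)).1
    have h2 := (hr (i + 1)).1
    unfold xAng yAng zAng
    by_cases hi : Ω (i - 1) = Ω i
    · have h3 := hc i (fun h => h hi)
      simp only [if_pos hi]
      split_ifs <;> refine ⟨?_, ?_, ?_⟩ <;> linarith [h0.1, h0.2]
    · have h3 := abs_lt.1 (hh i hi)
      simp only [if_neg hi]
      split_ifs <;> refine ⟨?_, ?_, ?_⟩ <;> linarith [h0.1, h0.2, h3.1, h3.2]
end
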